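/- Almost additivity of the gauge integrand (Euclidean version): Let X = (x, 𝕏) be a weak-geometric p-rough path with control ω on [0,T], let (ψ, U) be a local gauge on ℝ^d with open domain D, let W₀ ⊆ ℝ^d be open convex with W₀ × W₀ ⊆ D, let (y, y†) be an ℝ^d-valued rough path controlled by X on [0,T] with y([0,T]) ⊆ W₀, let V be a Banach space, and let (α, α†) be a U-controlled one-form along y with values in V (with the controlled-one-form bounds holding for all 0 ≤ s ≤ t ≤ T). For m ∈ W₀ define the bilinear map S^𝒢_m : ℝ^d × ℝ^d → ℝ^d by S^𝒢_m(v, w) := ((D₂U)(m,m)⟨v⟩)(w) − (D₂²ψ)(m,m)(v, w), and for (s,t) set z̃_{s,t} := α_s( ψ(y_s, y_t) + S^𝒢_{y_s}[(y_s† ⊗ y_s†) 𝕏_{s,t}] ) + α_s†( (I_W ⊗ y_s†) 𝕏_{s,t} ) ∈ V. Then there exists C < ∞ such that |z̃_{s,u} − z̃_{s,t} − z̃_{t,u}| ≤ C ω(s,u)^{3/p} for all 0 ≤ s ≤ t ≤ u ≤ T. -/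

import Mathlib

noncomputable section

open scoped BigOperators

/-- `ℝ^n` with the Euclidean norm. -/
abbrev Euc (n : ℕ) : Type := EuclideanSpace ℝ (Fin n)

/-- The `i`-th standard basis vector of `ℝ^n`. -/
def eb {n : ℕ} (i : Fin n) : Euc n := EuclideanSpace.single i 1

/-- Tensor product of two Euclidean vectors, realized in `ℝ^{n×m}` with the Euclidean norm. -/
def tensorE {n m : ℕ} (v : Euc n) (w : Euc m) : EuclideanSpace ℝ (Fin n × Fin m) :=
  (EuclideanSpace.equiv (Fin n × Fin m) ℝ).symm fun p => v p.1 * w p.2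

/-- Application of the (unique) linear extension of a bilinear map `B` to a tensor
`X ∈ ℝ^n ⊗ ℝ^m ≅ ℝ^{n × m}`. -/
def tapply {n m : ℕ} {V : Type*} [NormedAddCommGroup V] [NormedSpace ℝ V]
    (B : Euc n → Euc m → V) (X : EuclideanSpace ℝ (Fin n × Fin m)) : V :=
  ∑ q : Fin n × Fin m, X q • B (eb q.1) (eb q.2)
/-- `ω` is a control on the simplex `{(s,t) : 0 ≤ s ≤ t ≤ T}`. -/
structure IsControl (T : ℝ) (ω : ℝ → ℝ → ℝ) : Prop where
  cont : ContinuousOn (fun q : ℝ × ℝ => ω q.1 q.2)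
    {q : ℝ × ℝ | 0 ≤ q.1 ∧ q.1 ≤ q.2 ∧ q.2 ≤ T}
  nonneg : ∀ ⦃s t : ℝ⦄, 0 ≤ s → s ≤ t → t ≤ T → 0 ≤ ω s t
  zero : ∀ ⦃s : ℝ⦄, 0 ≤ s → s ≤ T → ω s s = 0
  superadditive : ∀ ⦃s t u : ℝ⦄, 0 ≤ s → s ≤ t → t ≤ u → u ≤ T → ω s t + ω t u ≤ ω s u
/-- `(x, XX)` is a `p`-rough path with control `ω` on `[0,T]`. -/
structure IsRoughPath (T p : ℝ) {k : ℕ} (ω : ℝ → ℝ → ℝ)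
    (x : ℝ → Euc k) (XX : ℝ → ℝ → EuclideanSpace ℝ (Fin k × Fin k)) : Prop where
  cont_x : ContinuousOn x (Set.Icc 0 T)
  cont_XX : ContinuousOn (fun q : ℝ × ℝ => XX q.1 q.2)
    {q : ℝ × ℝ | 0 ≤ q.1 ∧ q.1 ≤ q.2 ∧ q.2 ≤ T}
  chen : ∀ ⦃s t u : ℝ⦄, 0 ≤ s → s ≤ t → t ≤ u → u ≤ T →
    XX s u = XX s t + XX t u + tensorE (x t - x s) (x u - x t)
  bound_x : ∀ ⦃s t : ℝ⦄, 0 ≤ s → s ≤ t → t ≤ T → ‖x t - x s‖ ≤ ω s t ^ (1 / p)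
  bound_XX : ∀ ⦃s t : ℝ⦄, 0 ≤ s → s ≤ t → t ≤ T → ‖XX s t‖ ≤ ω s t ^ (2 / p)
/-- The rough path `(x, XX)` is weak-geometric: the symmetric part of `XX s t` is
`(1/2) x_{s,t} ⊗ x_{s,t}`. -/
def IsWeakGeometric (T : ℝ) {k : ℕ} (x : ℝ → Euc k)
    (XX : ℝ → ℝ → EuclideanSpace ℝ (Fin k × Fin k)) : Prop :=
  ∀ ⦃s t : ℝ⦄, 0 ≤ s → s ≤ t → t ≤ T → ∀ i j : Fin k,
    XX s t (i, j) + XX s t (j, i) = (x t - x s) i * (x t - x s) j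
/-- `(y, y')` is a `V`-valued rough path controlled by `X = (x, ·)` (with control `ω`)
on the interval `[a, b]`. -/
def IsCRP (p : ℝ) {k : ℕ} (ω : ℝ → ℝ → ℝ) (x : ℝ → Euc k)
    {V : Type*} [NormedAddCommGroup V] [NormedSpace ℝ V]
    (a b : ℝ) (y : ℝ → V) (y' : ℝ → Euc k →L[ℝ] V) : Prop :=
  ContinuousOn y (Set.Icc a b) ∧ ContinuousOn y' (Set.Icc a b) ∧
    ∃ C : ℝ, ∀ ⦃s t : ℝ⦄, a ≤ s → s ≤ t → t ≤ b →
      ‖y t - y s - y' s (x t - x s)‖ ≤ C * ω s t ^ (2 / p) ∧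
      ‖y' t - y' s‖ ≤ C * ω s t ^ (1 / p)
/-- `(ψ, U)` is a local gauge on `ℝ^d` with open domain `D`. -/
structure IsLocalGauge {d : ℕ} (D : Set (Euc d × Euc d))
    (ψ : Euc d × Euc d → Euc d) (U : Euc d × Euc d → Euc d →L[ℝ] Euc d) : Prop where
  open_dom : IsOpen D
  smooth_psi : ContDiffOn ℝ (⊤ : ℕ∞) ψ D
  smooth_U : ContDiffOn ℝ (⊤ : ℕ∞) U D
  diag_psi : ∀ x : Euc d, (x, x) ∈ D → ψ (x, x) = 0
  diag_dpsi : ∀ x : Euc d, (x, x) ∈ D →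
    fderiv ℝ (fun w => ψ (x, w)) x = ContinuousLinearMap.id ℝ (Euc d)
  diag_U : ∀ x : Euc d, (x, x) ∈ D → U (x, x) = ContinuousLinearMap.id ℝ (Euc d)

/-- `(α, α')` is a `V`-valued `U`-controlled (rough) one-form along `y` on `[0,T]`:
`α'_s ∈ L(W ⊗ ℝ^d, V)` is recorded in curried form, and the second estimate is recorded
slotwise in the `W`-variable (equivalently, in operator norm). -/
def IsControlledOneForm (T p : ℝ) {k d : ℕ} (ω : ℝ → ℝ → ℝ) (x : ℝ → Euc k)
    (U : Euc d × Euc d → Euc d →L[ℝ] Euc d) (y : ℝ → Euc d)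
    {V : Type*} [NormedAddCommGroup V] [NormedSpace ℝ V]
    (α : ℝ → Euc d →L[ℝ] V) (α' : ℝ → Euc k →L[ℝ] Euc d →L[ℝ] V) : Prop :=
  ContinuousOn α (Set.Icc 0 T) ∧ ContinuousOn α' (Set.Icc 0 T) ∧
    ∃ C : ℝ, ∀ ⦃s t : ℝ⦄, 0 ≤ s → s ≤ t → t ≤ T →
      ‖(α t).comp (U (y t, y s)) - α s - α' s (x t - x s)‖ ≤ C * ω s t ^ (2 / p) ∧
      ∀ w : Euc k,
        ‖(α' t w).comp (U (y t, y s)) - α' s w‖ ≤ C * ‖w‖ * ω s t ^ (1 / p)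

/-- The compatibility bilinear form `S^𝒢_m(v, w) = (D₂U)(m,m)⟨v⟩⟨w⟩ − (D₂²ψ)(m,m)(v, w)`
of a gauge `𝒢 = (ψ, U)` on `ℝ^d`. -/
def Sgauge {d : ℕ} (ψ : Euc d × Euc d → Euc d)
    (U : Euc d × Euc d → Euc d →L[ℝ] Euc d) (m v w : Euc d) : Euc d :=
  fderiv ℝ (fun z => U (m, z)) m v w
    - fderiv ℝ (fun z => fderiv ℝ (fun z' => ψ (m, z')) z) m v w

/-- The local gauge-integrand
`z̃_{s,t} = α_s (ψ(y_s,y_t) + S^𝒢_{y_s}[(y'_s ⊗ y'_s) 𝕏_{s,t}]) + α'_s ((I ⊗ y'_s) 𝕏_{s,t})`. -/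
def gaugeIntegrand {k d : ℕ} (ψ : Euc d × Euc d → Euc d)
    (U : Euc d × Euc d → Euc d →L[ℝ] Euc d)
    (XX : ℝ → ℝ → EuclideanSpace ℝ (Fin k × Fin k))
    (y : ℝ → Euc d) (y' : ℝ → Euc k →L[ℝ] Euc d)
    {V : Type*} [NormedAddCommGroup V] [NormedSpace ℝ V]
    (α : ℝ → Euc d →L[ℝ] V) (α' : ℝ → Euc k →L[ℝ] Euc d →L[ℝ] V)
    (s t : ℝ) : V :=
  α s (ψ (y s, y t) +
      tapply (fun v w => Sgauge ψ U (y s) (y' s v) (y' s w)) (XX s t)) +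
    tapply (fun w v => α' s w (y' s v)) (XX s t)

section helpers
open Asymptotics Filter Topology

lemma exists_cc {d : ℕ} {W₀ K : Set (Euc d)} (ho : IsOpen W₀) (hc : Convex ℝ W₀)
    (hK : IsCompact K) (hKW : K ⊆ W₀) :
    ∃ L : Set (Euc d), IsCompact L ∧ Convex ℝ L ∧ K ⊆ L ∧ L ⊆ W₀ := by
  have key : ∃ F : Set (Euc d), F.Finite ∧ F ⊆ W₀ ∧ K ⊆ convexHull ℝ F := by
    refine hK.induction_on (p := fun s => ∃ F : Set (Euc d), F.Finite ∧ F ⊆ W₀ ∧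
      s ⊆ convexHull ℝ F) ?_ ?_ ?_ ?_
    · exact ⟨∅, Set.finite_empty, by simp, by simp⟩
    · rintro s t hst ⟨F, h1, h2, h3⟩
      exact ⟨F, h1, h2, hst.trans h3⟩
    · rintro s t ⟨F, h1, h2, h3⟩ ⟨G, g1, g2, g3⟩
      refine ⟨F ∪ G, h1.union g1, Set.union_subset h2 g2, Set.union_subset ?_ ?_⟩
      · exact h3.trans (convexHull_mono Set.subset_union_left)
      · exact g3.trans (convexHull_mono Set.subset_union_right)
    · intro p hp
      obtain ⟨u, hu1, hu2⟩ := (convex_singleton (𝕜 := ℝ) p).exists_subset_interior_convexHull_finset_of_isCompact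
        isCompact_singleton (t := W₀) (by
          rw [nhdsSet_singleton]; exact ho.mem_nhds (hKW hp))
      refine ⟨interior (convexHull ℝ (u : Set (Euc d))), mem_nhdsWithin_of_mem_nhds
        (isOpen_interior.mem_nhds (hu1 rfl)), u, u.finite_toSet, ?_, interior_subset⟩
      exact (subset_convexHull ℝ _).trans hu2
  obtain ⟨F, h1, h2, h3⟩ := key
  exact ⟨convexHull ℝ F, h1.isCompact_convexHull ℝ, convex_convexHull ℝ F, h3,
    convexHull_min h2 hc⟩

lemma taylorA {E G : Type*} [NormedAddCommGroup E] [NormedSpace ℝ E]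
    [NormedAddCommGroup G] [NormedSpace ℝ G] {L : Set E} (hL : Convex ℝ L)
    {f : E → G} {f' : E → E →L[ℝ] G} (hf : ∀ z ∈ L, HasFDerivAt f (f' z) z)
    {m w : E} (hm : m ∈ L) (hw : w ∈ L) {φ : E →L[ℝ] G} {C : ℝ} (hC : 0 ≤ C) {n : ℕ}
    (hb : ∀ z ∈ L, ‖f' z - φ‖ ≤ C * ‖z - m‖ ^ n) :
    ‖f w - f m - φ (w - m)‖ ≤ C * ‖w - m‖ ^ (n + 1) := by
  have hsub : segment ℝ m w ⊆ L := hL.segment_subset hm hw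
  have := (convex_segment m w).norm_image_sub_le_of_norm_hasFDerivWithin_le' (f := f) (f' := f')
    (φ := φ) (C := C * ‖w - m‖ ^ n)
    (fun z hz => (hf z (hsub hz)).hasFDerivWithinAt) (by
      intro z hz
      refine (hb z (hsub hz)).trans ?_
      have : ‖z - m‖ ≤ ‖w - m‖ := by
        rw [segment_eq_image'] at hz
        obtain ⟨θ, ⟨h0, h1⟩, rfl⟩ := hz
        simp only [add_sub_cancel_left, norm_smul, Real.norm_eq_abs, abs_of_nonneg h0]
        exact mul_le_of_le_one_left (norm_nonneg _) h1
      gcongr)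
    (left_mem_segment ℝ m w) (right_mem_segment ℝ m w)
  rw [pow_succ, ← mul_assoc]; exact this

/-- partial derivative in second variable -/
def pd2 {E G : Type*} [NormedAddCommGroup E] [NormedSpace ℝ E]
    [NormedAddCommGroup G] [NormedSpace ℝ G] (f : E × E → G) (q : E × E) : E →L[ℝ] G :=
  (fderiv ℝ f q).comp (ContinuousLinearMap.inr ℝ E E)

lemma pd2_smooth {E G : Type*} [NormedAddCommGroup E] [NormedSpace ℝ E]
    [NormedAddCommGroup G] [NormedSpace ℝ G] {f : E × E → G} {D : Set (E × E)} (hD : IsOpen D)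
    (hf : ContDiffOn ℝ (⊤ : ℕ∞) f D) : ContDiffOn ℝ (⊤ : ℕ∞) (pd2 f) D := by
  have := hf.fderiv_of_isOpen (m := (⊤ : ℕ∞)) hD (by norm_cast)
  exact this.clm_comp contDiffOn_const

lemma pd2_hasFDerivAt {E G : Type*} [NormedAddCommGroup E] [NormedSpace ℝ E]
    [NormedAddCommGroup G] [NormedSpace ℝ G] {f : E × E → G} {D : Set (E × E)} (hD : IsOpen D)
    (hf : ContDiffOn ℝ (⊤ : ℕ∞) f D) {m z : E} (h : (m, z) ∈ D) :
    HasFDerivAt (fun w => f (m, w)) (pd2 f (m, z)) z := by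
  have h1 : HasFDerivAt f (fderiv ℝ f (m, z)) (m, z) :=
    ((hf.contDiffAt (hD.mem_nhds h)).differentiableAt (by simp)).hasFDerivAt
  exact h1.comp z (hasFDerivAt_prodMk_right m z)

lemma pd2_lip {E G : Type*} [NormedAddCommGroup E] [NormedSpace ℝ E]
    [NormedAddCommGroup G] [NormedSpace ℝ G] {f : E × E → G} {D : Set (E × E)}
    (hf : ContDiffOn ℝ (⊤ : ℕ∞) f D) {L : Set E} (hL : IsCompact L) (hLc : Convex ℝ L)
    (hLD : L ×ˢ L ⊆ D) : ∃ C : ℝ, 0 ≤ C ∧ ∀ a ∈ L, ∀ b ∈ L, ∀ a' ∈ L, ∀ b' ∈ L,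
      ‖f (a, b) - f (a', b')‖ ≤ C * (‖a - a'‖ + ‖b - b'‖) := by
  obtain ⟨K, hK⟩ := (hf.mono hLD).exists_lipschitzOnWith (by simp) (hLc.prod hLc) (hL.prod hL)
  refine ⟨K, K.2, fun a ha b hb a' ha' b' hb' => ?_⟩
  refine (hK.norm_sub_le (Set.mk_mem_prod ha hb) (Set.mk_mem_prod ha' hb')).trans ?_
  gcongr
  rw [Prod.mk_sub_mk, Prod.norm_mk]
  exact max_le_add_of_nonneg (norm_nonneg _) (norm_nonneg _)

lemma taylor1 {E G : Type*} [NormedAddCommGroup E] [NormedSpace ℝ E]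
    [NormedAddCommGroup G] [NormedSpace ℝ G] {f : E × E → G} {D : Set (E × E)} (hD : IsOpen D)
    (hf : ContDiffOn ℝ (⊤ : ℕ∞) f D) {L : Set E} (hL : IsCompact L) (hLc : Convex ℝ L)
    (hLD : L ×ˢ L ⊆ D) : ∃ C : ℝ, 0 ≤ C ∧ ∀ m ∈ L, ∀ w ∈ L,
      ‖f (m, w) - f (m, m) - pd2 f (m, m) (w - m)‖ ≤ C * ‖w - m‖ ^ 2 := by
  obtain ⟨C, hC, h⟩ := pd2_lip (pd2_smooth hD hf) hL hLc hLD
  refine ⟨C, hC, fun m hm w hw => ?_⟩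
  refine taylorA (f := fun w => f (m, w)) (f' := fun z => pd2 f (m, z)) hLc
    (fun z hz => pd2_hasFDerivAt hD hf (hLD ⟨hm, hz⟩)) hm hw hC (n := 1) (fun z hz => ?_)
  simpa using h m hm z hz m hm m hm

lemma pd2_pd2_eq {E G : Type*} [NormedAddCommGroup E] [NormedSpace ℝ E]
    [NormedAddCommGroup G] [NormedSpace ℝ G] {f : E × E → G} {D : Set (E × E)} (hD : IsOpen D)
    (hf : ContDiffOn ℝ (⊤ : ℕ∞) f D) {m z : E} (h : (m, z) ∈ D) :
    fderiv ℝ (fun z => fderiv ℝ (fun z' => f (m, z')) z) z = pd2 (pd2 f) (m, z) := by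
  have h1 := pd2_hasFDerivAt hD (pd2_smooth hD hf) h
  refine (h1.congr_of_eventuallyEq ?_).fderiv
  have : ∀ᶠ w in 𝓝 z, (m, w) ∈ D :=
    (Continuous.prodMk_right m).continuousAt.preimage_mem_nhds (hD.mem_nhds h)
  filter_upwards [this] with w hw
  exact (pd2_hasFDerivAt hD hf hw).fderiv

lemma pd2_pd2_symm {E G : Type*} [NormedAddCommGroup E] [NormedSpace ℝ E]
    [NormedAddCommGroup G] [NormedSpace ℝ G] {f : E × E → G} {D : Set (E × E)} (hD : IsOpen D)
    (hf : ContDiffOn ℝ (⊤ : ℕ∞) f D) {m z : E} (h : (m, z) ∈ D) (v w : E) :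
    pd2 (pd2 f) (m, z) v w = pd2 (pd2 f) (m, z) w v := by
  rw [← pd2_pd2_eq hD hf h]
  have h1 : ContDiffAt ℝ (⊤ : ℕ∞) (fun w => f (m, w)) z :=
    (hf.contDiffAt (hD.mem_nhds h)).comp z (contDiffAt_const.prodMk contDiffAt_id)
  exact h1.isSymmSndFDerivAt (by simpa using (by norm_cast : (2 : WithTop ℕ∞) ≤ ((⊤ : ℕ∞) : WithTop ℕ∞))) v w

lemma taylor2 {E G : Type*} [NormedAddCommGroup E] [NormedSpace ℝ E]
    [NormedAddCommGroup G] [NormedSpace ℝ G] {f : E × E → G} {D : Set (E × E)} (hD : IsOpen D)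
    (hf : ContDiffOn ℝ (⊤ : ℕ∞) f D) {L : Set E} (hL : IsCompact L) (hLc : Convex ℝ L)
    (hLD : L ×ˢ L ⊆ D) : ∃ C : ℝ, 0 ≤ C ∧ ∀ m ∈ L, ∀ w ∈ L,
      ‖f (m, w) - f (m, m) - pd2 f (m, m) (w - m)
        - (1 / 2 : ℝ) • pd2 (pd2 f) (m, m) (w - m) (w - m)‖ ≤ C * ‖w - m‖ ^ 3 := by
  obtain ⟨C, hC, h⟩ := taylor1 hD (pd2_smooth hD hf) hL hLc hLD
  refine ⟨C, hC, fun m hm w hw => ?_⟩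
  set B := pd2 (pd2 f) (m, m) with hB
  have hder : ∀ z ∈ L, HasFDerivAt (fun w => f (m, w) - (1 / 2 : ℝ) • B (w - m) (w - m))
      (pd2 f (m, z) - B (z - m)) z := by
    intro z hz
    refine (pd2_hasFDerivAt hD hf (hLD ⟨hm, hz⟩)).sub ?_
    have h0 : HasFDerivAt (fun w : E => w - m) (ContinuousLinearMap.id ℝ E) z :=
      (hasFDerivAt_id z).sub_const m
    have h1 : HasFDerivAt (fun w : E => B (w - m)) B z := by
      exact B.hasFDerivAt.comp z h0
    have h2 := (h1.clm_apply h0).const_smul (1 / 2 : ℝ)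
    refine h2.congr_fderiv ?_
    ext v
    change (1 / 2 : ℝ) • (B (z - m) v + B v (z - m)) = B (z - m) v
    rw [hB, pd2_pd2_symm hD hf (hLD ⟨hm, hm⟩) v (z - m), ← two_smul ℝ, smul_smul]
    norm_num
  have := taylorA (φ := pd2 f (m, m)) hLc hder hm hw hC (n := 2) (fun z hz => by
    rw [sub_right_comm]; exact h m hm z hz)
  convert this using 2
  simp only [sub_self, map_zero, smul_zero, sub_zero]
  abel

end helpers

section core
open Asymptotics Filter Topology

lemma tapply_add {n m : ℕ} {V : Type*} [NormedAddCommGroup V] [NormedSpace ℝ V]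
    (B : Euc n → Euc m → V) (X Y : EuclideanSpace ℝ (Fin n × Fin m)) :
    tapply B (X + Y) = tapply B X + tapply B Y := by
  simp [tapply, add_smul, Finset.sum_add_distrib]

lemma tapply_sub {n m : ℕ} {V : Type*} [NormedAddCommGroup V] [NormedSpace ℝ V]
    (B B' : Euc n → Euc m → V) (X : EuclideanSpace ℝ (Fin n × Fin m)) :
    tapply B X - tapply B' X = tapply (fun v w => B v w - B' v w) X := by
  simp [tapply, smul_sub, Finset.sum_sub_distrib]

lemma sum_eb {n : ℕ} (v : Euc n) : ∑ i, v i • (eb i : Euc n) = v := by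
  ext j
  simp [eb, Finset.sum_apply, Pi.single_apply]

lemma tapply_tensor {n m : ℕ} {V : Type*} [NormedAddCommGroup V] [NormedSpace ℝ V]
    (B : Euc n →L[ℝ] Euc m →L[ℝ] V) (v : Euc n) (w : Euc m) :
    tapply (fun v w => B v w) (tensorE v w) = B v w := by
  conv_rhs => rw [← sum_eb v, ← sum_eb w]
  simp only [tapply, tensorE, map_sum, map_smul, _root_.sum_apply, _root_.smul_apply,
    Fintype.sum_prod_type, Finset.smul_sum]
  rw [Finset.sum_comm]
  refine Finset.sum_congr rfl fun j _ => Finset.sum_congr rfl fun i _ => ?_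
  rw [smul_smul, mul_comm (w j)]
  rfl

variable {ι : Type*} {l : Filter ι}

lemma O_apply {E F : Type*} [NormedAddCommGroup E] [NormedSpace ℝ E]
    [NormedAddCommGroup F] [NormedSpace ℝ F] {A : ι → E →L[ℝ] F} {v : ι → E}
    {g h : ι → ℝ} (hA : A =O[l] g) (hv : v =O[l] h) :
    (fun i => A i (v i)) =O[l] fun i => g i * h i := by
  refine IsBigO.trans (isBigO_of_le _ fun i => ?_) (hA.norm_norm.mul hv.norm_norm |>.trans ?_)
  · rw [norm_mul, norm_norm, norm_norm]
    exact (A i).le_opNorm _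
  · exact isBigO_of_le _ fun i => by simp

lemma O_comp {E F G : Type*} [NormedAddCommGroup E] [NormedSpace ℝ E]
    [NormedAddCommGroup F] [NormedSpace ℝ F] [NormedAddCommGroup G] [NormedSpace ℝ G]
    {A : ι → F →L[ℝ] G} {v : ι → E →L[ℝ] F}
    {g h : ι → ℝ} (hA : A =O[l] g) (hv : v =O[l] h) :
    (fun i => (A i).comp (v i)) =O[l] fun i => g i * h i := by
  refine IsBigO.trans (isBigO_of_le _ fun i => ?_) (hA.norm_norm.mul hv.norm_norm |>.trans ?_)
  · rw [norm_mul, norm_norm, norm_norm]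
    exact (A i).opNorm_comp_le _
  · exact isBigO_of_le _ fun i => by simp

lemma O_tapply {n m : ℕ} {V : Type*} [NormedAddCommGroup V] [NormedSpace ℝ V]
    {F : ι → Euc n → Euc m → V} {X : ι → EuclideanSpace ℝ (Fin n × Fin m)}
    {g h : ι → ℝ} (hF : ∀ v w, (fun i => F i v w) =O[l] g) (hX : X =O[l] h) :
    (fun i => tapply (F i) (X i)) =O[l] fun i => g i * h i := by
  unfold tapply
  refine IsBigO.fun_sum fun q _ => ?_
  have h1 : (fun i => X i q) =O[l] h :=
    (isBigO_of_le _ fun i => PiLp.norm_apply_le (X i) q).trans hX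
  exact (h1.smul (hF _ _)).congr_right fun i => by simp [mul_comm]

lemma O_sa {E : Type*} [NormedAddCommGroup E] {f g : ι → E} {h : ι → ℝ}
    (h1 : (fun i => f i - g i) =O[l] h) (h2 : g =O[l] h) : f =O[l] h :=
  (h1.add h2).congr_left fun i => sub_add_cancel _ _

set_option maxHeartbeats 4000000 in
theorem core {k d : ℕ} {V : Type*} [NormedAddCommGroup V] [NormedSpace ℝ V]
    {e : ι → ℝ} {a b c pab pac pbc : ι → Euc d} {ys yt : ι → Euc k →L[ℝ] Euc d}
    {αs αt : ι → Euc d →L[ℝ] V} {βs βt : ι → Euc k →L[ℝ] Euc d →L[ℝ] V}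
    {x1 x2 : ι → Euc k} {X1 X2 X3 : ι → EuclideanSpace ℝ (Fin k × Fin k)}
    {Uba : ι → Euc d →L[ℝ] Euc d} {Ua Ub Ba Bb : ι → Euc d →L[ℝ] Euc d →L[ℝ] Euc d}
    (he : e =O[l] fun _ => (1 : ℝ))
    (hX3 : ∀ i, X3 i = X1 i + X2 i + tensorE (x1 i) (x2 i))
    (h1 : (fun i => b i - a i - ys i (x1 i)) =O[l] fun i => e i ^ 2)
    (h2 : (fun i => c i - b i - yt i (x2 i)) =O[l] fun i => e i ^ 2)
    (hy : (fun i => yt i - ys i) =O[l] e)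
    (hys : ys =O[l] fun _ => (1 : ℝ)) (hyt : yt =O[l] fun _ => (1 : ℝ))
    (hx1 : x1 =O[l] e) (hx2 : x2 =O[l] e) (hX2 : X2 =O[l] fun i => e i ^ 2)
    (hαs : αs =O[l] fun _ => (1 : ℝ)) (hαt : αt =O[l] fun _ => (1 : ℝ))
    (hβs : βs =O[l] fun _ => (1 : ℝ)) (hβt : βt =O[l] fun _ => (1 : ℝ))
    (hα : (fun i => (αt i).comp (Uba i) - αs i - βs i (x1 i)) =O[l] fun i => e i ^ 2)
    (hβ : ∀ w, (fun i => (βt i w).comp (Uba i) - βs i w) =O[l] e)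
    (hU : ((fun i => (b i - a i)) =O[l] e) →
      (fun i => Uba i - ContinuousLinearMap.id ℝ _ - Ub i (a i - b i)) =O[l] fun i => e i ^ 2)
    (hUb : ((fun i => (b i - a i)) =O[l] e) → (fun i => Ub i - Ua i) =O[l] e)
    (hUa : Ua =O[l] fun _ => (1 : ℝ))
    (hBb : ((fun i => (b i - a i)) =O[l] e) → (fun i => Bb i - Ba i) =O[l] e)
    (hBa : Ba =O[l] fun _ => (1 : ℝ))
    (hsym : ∀ i v w, Ba i v w = Ba i w v)
    (hab : ((fun i => (b i - a i)) =O[l] e) →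
      (fun i => pab i - (b i - a i) - (1 / 2 : ℝ) • Ba i (b i - a i) (b i - a i))
      =O[l] fun i => e i ^ 3)
    (hac : ((fun i => (c i - a i)) =O[l] e) →
      (fun i => pac i - (c i - a i) - (1 / 2 : ℝ) • Ba i (c i - a i) (c i - a i))
      =O[l] fun i => e i ^ 3)
    (hbc : ((fun i => (c i - b i)) =O[l] e) →
      (fun i => pbc i - (c i - b i) - (1 / 2 : ℝ) • Bb i (c i - b i) (c i - b i))
      =O[l] fun i => e i ^ 3) :
    (fun i =>
      (αs i (pac i + tapply (fun v w => (Ua i - Ba i) (ys i v) (ys i w)) (X3 i))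
        + tapply (fun w v => βs i w (ys i v)) (X3 i)) -
      (αs i (pab i + tapply (fun v w => (Ua i - Ba i) (ys i v) (ys i w)) (X1 i))
        + tapply (fun w v => βs i w (ys i v)) (X1 i)) -
      (αt i (pbc i + tapply (fun v w => (Ub i - Bb i) (yt i v) (yt i w)) (X2 i))
        + tapply (fun w v => βt i w (yt i v)) (X2 i))) =O[l] fun i => e i ^ 3 := by
  have one_mul' : ∀ {f : ι → ℝ}, (fun i => (1 : ℝ) * f i) = f := by intro f; simp
  have pw : ∀ {m n : ℕ}, n ≤ m → (fun i => e i ^ m) =O[l] fun i => e i ^ n := by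
    intro m n hmn
    obtain ⟨j, rfl⟩ := Nat.exists_eq_add_of_le hmn
    have := (isBigO_refl (fun i => e i ^ n) l).mul (he.pow j)
    simpa [pow_add] using this
  have e2e : (fun i => e i ^ 2) =O[l] e := by simpa using pw (m := 2) (n := 1) (by norm_num)
  have e32 : (fun i => e i ^ 3) =O[l] fun i => e i ^ 2 := pw (by norm_num)
  -- increments
  have d1 : (fun i => b i - a i) =O[l] e := by
    have := (h1.trans e2e).add ((O_apply hys hx1).trans (by rw [one_mul']; exact isBigO_refl _ _))
    simpa using this
  have d2 : (fun i => c i - b i) =O[l] e := by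
    have := (h2.trans e2e).add ((O_apply hyt hx2).trans (by rw [one_mul']; exact isBigO_refl _ _))
    simpa using this
  have d3 : (fun i => c i - a i) =O[l] e := by
    simpa using d2.add d1
  replace hU := hU d1
  replace hUb := hUb d1
  replace hBb := hBb d1
  replace hab := hab d1
  replace hac := hac d3
  replace hbc := hbc d2
  have r2 : (fun i => c i - b i - ys i (x2 i)) =O[l] fun i => e i ^ 2 := by
    have := h2.add ((O_apply hy hx2).congr_right (g₂ := fun i => e i ^ 2) fun i => by ring)
    refine this.congr_left fun i => ?_
    simp
  have hUbO : Ub =O[l] fun _ => (1 : ℝ) := O_sa (E := Euc d →L[ℝ] Euc d →L[ℝ] Euc d) (hUb.trans he) hUa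
  have hBbO : Bb =O[l] fun _ => (1 : ℝ) := O_sa (E := Euc d →L[ℝ] Euc d →L[ℝ] Euc d) (hBb.trans he) hBa
  have d1' : (fun i => a i - b i) =O[l] e := by simpa using d1.neg_left
  have Ubd : (fun i => Ub i (a i - b i)) =O[l] e :=
    (O_apply hUbO d1').congr_right fun i => by simp
  have U1 : (fun i => Uba i - ContinuousLinearMap.id ℝ _) =O[l] e := O_sa (hU.trans e2e) Ubd
  have βx : (fun i => βs i (x1 i)) =O[l] e := (O_apply hβs hx1).congr_right fun i => by simp
  -- αt - αs
  have aU : (fun i => (αt i).comp (Uba i - ContinuousLinearMap.id ℝ _)) =O[l] e :=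
    (O_comp hαt U1).congr_right fun i => by simp
  have a1 : (fun i => αt i - αs i) =O[l] e := by
    refine (((hα.trans e2e).add βx).sub aU).congr_left fun i => ?_
    ext v; simp
  have a2 : (fun i => αt i - αs i - βs i (x1 i) - (αs i).comp (Ua i (b i - a i)))
      =O[l] fun i => e i ^ 2 := by
    have t1 : (fun i => (αt i).comp (Uba i - ContinuousLinearMap.id ℝ _ - Ub i (a i - b i)))
      =O[l] fun i => e i ^ 2 := (O_comp hαt hU).congr_right fun i => by simp
    have t2 : (fun i => (αt i - αs i).comp (Ub i (b i - a i))) =O[l] fun i => e i ^ 2 :=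
      (O_comp a1 (O_apply hUbO d1)).congr_right fun i => by ring
    have t3 : (fun i => (αs i).comp ((Ub i - Ua i) (b i - a i))) =O[l] fun i => e i ^ 2 :=
      (O_comp hαs (O_apply hUb d1)).congr_right fun i => by ring
    refine (((hα.sub t1).add t2).add t3).congr_left fun i => ?_
    ext v; simp; abel
  -- βt - βs
  have bw : ∀ w, (fun i => βt i w - βs i w) =O[l] e := by
    intro w
    have hb1 : (fun i => βt i w) =O[l] fun _ => (1 : ℝ) :=
      (O_apply hβt (isBigO_const_const w one_ne_zero l)).congr_right (fun i => by simp)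
    have : (fun i => (βt i w).comp (Uba i - ContinuousLinearMap.id ℝ _)) =O[l] e :=
      (O_comp hb1 U1).congr_right fun i => by simp
    refine ((hβ w).sub this).congr_left fun i => ?_
    ext v; simp
  have c1 : ∀ v : Euc k, (fun _ : ι => v) =O[l] fun _ => (1 : ℝ) :=
    fun v => isBigO_const_const v one_ne_zero l
  have ysv : ∀ v, (fun i => ys i v) =O[l] fun _ => (1 : ℝ) :=
    fun v => (O_apply hys (c1 v)).congr_right fun i => by simp
  have ytv : ∀ v, (fun i => yt i v) =O[l] fun _ => (1 : ℝ) :=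
    fun v => (O_apply hyt (c1 v)).congr_right fun i => by simp
  have yv : ∀ v, (fun i => (yt i - ys i) v) =O[l] e :=
    fun v => (O_apply hy (c1 v)).congr_right fun i => by simp
  -- β tapply term
  have Tβ : (fun i => tapply (fun w v => βs i w (ys i v) - βt i w (yt i v)) (X2 i))
      =O[l] fun i => e i ^ 3 := by
    refine (O_tapply (g := e) (fun v w => ?_) hX2).congr_right fun i => by ring
    have t1 := (O_apply (bw v) (ytv w)).congr_right (g₂ := e) fun i => by simp
    have t2 := (O_apply (O_apply hβs (c1 v)) (yv w)).congr_right (g₂ := e) fun i => by simp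
    refine (t1.add t2).neg_left.congr_left fun i => ?_
    simp
  have hS : (fun i => Ua i - Ba i) =O[l] fun _ => (1 : ℝ) := IsBigO.sub (E' := Euc d →L[ℝ] Euc d →L[ℝ] Euc d) hUa hBa
  have hSt : (fun i => Ub i - Bb i) =O[l] fun _ => (1 : ℝ) := IsBigO.sub (E' := Euc d →L[ℝ] Euc d →L[ℝ] Euc d) hUbO hBbO
  have hSd : (fun i => (Ub i - Bb i) - (Ua i - Ba i)) =O[l] e := by
    refine (IsBigO.sub (E' := Euc d →L[ℝ] Euc d →L[ℝ] Euc d) hUb hBb).congr_left fun i => ?_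
    abel
  have TS : (fun i => tapply (fun v w => (Ua i - Ba i) (ys i v) (ys i w)
      - (Ub i - Bb i) (yt i v) (yt i w)) (X2 i)) =O[l] fun i => e i ^ 3 := by
    refine (O_tapply (g := e) (fun v w => ?_) hX2).congr_right fun i => by ring
    have t1 := (O_apply (O_apply hSd (ytv v)) (ytv w)).congr_right (g₂ := e) fun i => by simp
    have t2 := (O_apply (O_apply hS (yv v)) (ytv w)).congr_right (g₂ := e) fun i => by simp
    have t3 := (O_apply (O_apply hS (ysv v)) (yv w)).congr_right (g₂ := e) fun i => by simp
    refine ((t1.add t2).add t3).neg_left.congr_left fun i => ?_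
    simp; abel
  have TSt : (fun i => tapply (fun v w => (Ub i - Bb i) (yt i v) (yt i w)) (X2 i))
      =O[l] fun i => e i ^ 2 := by
    refine (O_tapply (g := fun _ => (1 : ℝ)) (fun v w => ?_) hX2).congr_right fun i => by ring
    exact (O_apply (O_apply hSt (ytv v)) (ytv w)).congr_right fun i => by simp
  -- T1: S-terms
  have P1 : (fun i => αs i (tapply (fun v w => (Ua i - Ba i) (ys i v) (ys i w)) (X2 i))
      - αt i (tapply (fun v w => (Ub i - Bb i) (yt i v) (yt i w)) (X2 i)))
      =O[l] fun i => e i ^ 3 := by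
    have t1 := (O_apply hαs TS).congr_right (g₂ := fun i => e i ^ 3) fun i => by ring
    have t2 := (O_apply a1 TSt).congr_right (g₂ := fun i => e i ^ 3) fun i => by ring
    refine (t1.sub t2).congr_left fun i => ?_
    rw [← tapply_sub]; simp
  -- S(y x1, y x2) - S(δ1, δ2)
  have P2 : (fun i => αs i ((Ua i - Ba i) (b i - a i) (c i - b i)
      - (Ua i - Ba i) (ys i (x1 i)) (ys i (x2 i)))) =O[l] fun i => e i ^ 3 := by
    have t1 := (O_apply (O_apply hS h1) d2).congr_right (g₂ := fun i => e i ^ 3) fun i => by ring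
    have t2 := (O_apply (O_apply hS (O_apply hys hx1)) r2).congr_right (g₂ := fun i => e i ^ 3)
      fun i => by ring
    refine (O_apply hαs (t1.add t2)).congr (fun i => ?_) fun i => by ring
    simp; abel
  have P3 : (fun i => βs i (x1 i) (c i - b i) - βs i (x1 i) (ys i (x2 i)))
      =O[l] fun i => e i ^ 3 := by
    refine (O_apply βx r2).congr (fun i => ?_) fun i => by ring
    simp
  -- ψ
  have Bc : (fun i => (1 / 2 : ℝ) • Bb i (c i - b i) (c i - b i)) =O[l] fun i => e i ^ 2 :=
    ((O_apply (O_apply hBbO d2) d2).const_smul_left (1 / 2 : ℝ)).congr_right fun i => by ring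
  have pb : (fun i => pbc i - (c i - b i)) =O[l] fun i => e i ^ 2 := O_sa (hbc.trans e32) Bc
  have pb1 : pbc =O[l] e := O_sa (pb.trans e2e) d2
  have P4 : (fun i => (αt i - αs i - βs i (x1 i) - (αs i).comp (Ua i (b i - a i))) (pbc i))
      =O[l] fun i => e i ^ 3 := (O_apply a2 pb1).congr_right fun i => by ring
  have P5 : (fun i => βs i (x1 i) (pbc i - (c i - b i))) =O[l] fun i => e i ^ 3 :=
    (O_apply βx pb).congr_right fun i => by ring
  have P6 : (fun i => αs i (Ua i (b i - a i) (pbc i - (c i - b i)))) =O[l] fun i => e i ^ 3 :=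
    (O_apply hαs (O_apply (O_apply hUa d1) pb)).congr_right fun i => by ring
  have P7 : (fun i => αs i ((1 / 2 : ℝ) • (Bb i - Ba i) (c i - b i) (c i - b i)))
      =O[l] fun i => e i ^ 3 :=
    (O_apply hαs ((O_apply (O_apply hBb d2) d2).const_smul_left (1 / 2 : ℝ))).congr_right
      fun i => by ring
  have P8 := (O_apply hαs ((hac.sub hab).sub hbc)).congr_right (g₂ := fun i => e i ^ 3)
    fun i => by ring
  refine ((((((((P1.sub P2).sub P3).sub P4).sub P5).sub P6).sub P7).add P8).add Tβ).congr_left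
    fun i => ?_
  have q1 : tapply (fun v w => (Ua i - Ba i) (ys i v) (ys i w)) (tensorE (x1 i) (x2 i))
      = (Ua i - Ba i) (ys i (x1 i)) (ys i (x2 i)) :=
    tapply_tensor ((Ua i - Ba i).bilinearComp (ys i) (ys i)) _ _
  have q2 : tapply (fun w v => βs i w (ys i v)) (tensorE (x1 i) (x2 i))
      = βs i (x1 i) (ys i (x2 i)) :=
    tapply_tensor ((βs i).bilinearComp (ContinuousLinearMap.id ℝ _) (ys i)) _ _
  rw [hX3 i, tapply_add, tapply_add, tapply_add, tapply_add, q1, q2, ← tapply_sub]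
  generalize tapply (fun v w => (Ua i - Ba i) (ys i v) (ys i w)) (X1 i) = z1
  generalize tapply (fun v w => (Ua i - Ba i) (ys i v) (ys i w)) (X2 i) = z2
  generalize tapply (fun v w => (Ub i - Bb i) (yt i v) (yt i w)) (X2 i) = z3
  generalize tapply (fun w v => βs i w (ys i v)) (X1 i) = z4
  generalize tapply (fun w v => βs i w (ys i v)) (X2 i) = z5
  generalize tapply (fun w v => βt i w (yt i v)) (X2 i) = z6
  have hca : c i - a i = (b i - a i) + (c i - b i) := by abel
  rw [hca]
  generalize b i - a i = δ1
  generalize c i - b i = δ2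
  have hs := hsym i δ2 δ1
  simp only [map_add, map_sub, map_smul, _root_.add_apply,
    _root_.sub_apply, ContinuousLinearMap.comp_apply, hs]
  module

lemma O_mk {F : Type*} [SeminormedAddCommGroup F] {f : ι → F} {g : ι → ℝ} (C : ℝ)
    (h : ∀ i, ‖f i‖ ≤ C * g i) (hg : ∀ i, 0 ≤ g i) : f =O[⊤] g := by
  rw [Asymptotics.isBigO_top]
  exact ⟨C, fun i => by rw [Real.norm_of_nonneg (hg i)]; exact h i⟩

lemma O_mk' {F : Type*} [SeminormedAddCommGroup F] {f : ι → F} {g r : ι → ℝ} (C : ℝ)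
    (h : ∀ i, ‖f i‖ ≤ C * r i) (hr : ∀ i, 0 ≤ r i) (hg : ∀ i, r i ≤ g i) : f =O[⊤] g := by
  refine (O_mk C h hr).trans (isBigO_of_le _ fun i => ?_)
  rw [Real.norm_of_nonneg (hr i), Real.norm_of_nonneg ((hr i).trans (hg i))]
  exact hg i

lemma O_bd {F : Type*} [SeminormedAddCommGroup F] {f : ℝ → F} {T : ℝ} (R : ι → ℝ)
    (hf : ContinuousOn f (Set.Icc 0 T)) (hR : ∀ i, R i ∈ Set.Icc 0 T) :
    (fun i => f (R i)) =O[⊤] fun _ => (1 : ℝ) := by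
  obtain ⟨C, hC⟩ := isCompact_Icc.exists_bound_of_continuousOn hf
  rw [Asymptotics.isBigO_top]
  exact ⟨C, fun i => by simpa using hC _ (hR i)⟩

end core

/-- **Almost additivity of the gauge integrand** (Euclidean version of Theorem 3.26 of
Driver–Semko). -/
theorem gaugeIntegrand_almost_additive
    {T p : ℝ} (hT : 0 < T) (hp1 : 1 ≤ p) (hp3 : p < 3) {k : ℕ} (hk : 1 ≤ k)
    {ω : ℝ → ℝ → ℝ} (hω : IsControl T ω)
    {x : ℝ → Euc k} {XX : ℝ → ℝ → EuclideanSpace ℝ (Fin k × Fin k)}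
    (hX : IsRoughPath T p ω x XX) (hgeo : IsWeakGeometric T x XX)
    {d : ℕ} {D : Set (Euc d × Euc d)}
    {ψ : Euc d × Euc d → Euc d} {U : Euc d × Euc d → Euc d →L[ℝ] Euc d}
    (hG : IsLocalGauge D ψ U)
    {W₀ : Set (Euc d)} (hW₀open : IsOpen W₀) (hW₀conv : Convex ℝ W₀)
    (hWD : W₀ ×ˢ W₀ ⊆ D)
    {y : ℝ → Euc d} {y' : ℝ → Euc k →L[ℝ] Euc d}
    (hy : IsCRP p ω x 0 T y y') (hyW : ∀ s ∈ Set.Icc (0 : ℝ) T, y s ∈ W₀)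
    {V : Type*} [NormedAddCommGroup V] [NormedSpace ℝ V]
    {α : ℝ → Euc d →L[ℝ] V} {α' : ℝ → Euc k →L[ℝ] Euc d →L[ℝ] V}
    (hα : IsControlledOneForm T p ω x U y α α') :
    ∃ C : ℝ, ∀ ⦃s t u : ℝ⦄, 0 ≤ s → s ≤ t → t ≤ u → u ≤ T →
      ‖gaugeIntegrand ψ U XX y y' α α' s u -
          gaugeIntegrand ψ U XX y y' α α' s t -
          gaugeIntegrand ψ U XX y y' α α' t u‖
        ≤ C * ω s u ^ (3 / p) := by
  obtain ⟨hyc, hy'c, Cy, hCy⟩ := hy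
  obtain ⟨hαc, hα'c, Cα, hCα⟩ := hα
  have hp0 : 0 < p := by linarith
  obtain ⟨L, hLK, hLc, hyL', hLW⟩ := exists_cc hW₀open hW₀conv
    (isCompact_Icc.image_of_continuousOn hyc) (by rintro _ ⟨s, hs, rfl⟩; exact hyW s hs)
  have hyL : ∀ s ∈ Set.Icc (0 : ℝ) T, y s ∈ L := fun s hs => hyL' ⟨s, hs, rfl⟩
  have hLD : L ×ˢ L ⊆ D := (Set.prod_mono hLW hLW).trans hWD
  have hDo := hG.open_dom
  obtain ⟨CU, hCU, hU⟩ := taylor1 hDo hG.smooth_U hLK hLc hLD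
  obtain ⟨CU1, hCU1, hU1⟩ := pd2_lip (pd2_smooth hDo hG.smooth_U) hLK hLc hLD
  obtain ⟨CB, hCB, hB⟩ := pd2_lip (pd2_smooth hDo (pd2_smooth hDo hG.smooth_psi)) hLK hLc hLD
  obtain ⟨Cp, hCp, hP⟩ := taylor2 hDo hG.smooth_psi hLK hLc hLD
  have hpd : ∀ m ∈ L, pd2 ψ (m, m) = ContinuousLinearMap.id ℝ (Euc d) := fun m hm => by
    rw [← hG.diag_dpsi m (hLD ⟨hm, hm⟩)]
    exact (pd2_hasFDerivAt hDo hG.smooth_psi (hLD ⟨hm, hm⟩)).fderiv.symm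
  have hP' : ∀ m ∈ L, ∀ w ∈ L, ‖ψ (m, w) - (w - m)
      - (1 / 2 : ℝ) • pd2 (pd2 ψ) (m, m) (w - m) (w - m)‖ ≤ Cp * ‖w - m‖ ^ 3 := by
    intro m hm w hw
    have := hP m hm w hw
    rw [hpd m hm, hG.diag_psi m (hLD ⟨hm, hm⟩), sub_zero] at this
    exact this
  have hSg : ∀ m ∈ L, ∀ v w, Sgauge ψ U m v w
      = (pd2 U (m, m) - pd2 (pd2 ψ) (m, m)) v w := by
    intro m hm v w
    have hm' : (m, m) ∈ D := hLD ⟨hm, hm⟩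
    unfold Sgauge
    rw [pd2_pd2_eq hDo hG.smooth_psi hm', (pd2_hasFDerivAt hDo hG.smooth_U hm').fderiv]
    rfl
  let ι := {q : ℝ × ℝ × ℝ // 0 ≤ q.1 ∧ q.1 ≤ q.2.1 ∧ q.2.1 ≤ q.2.2 ∧ q.2.2 ≤ T}
  let S : ι → ℝ := fun i => i.1.1
  let M : ι → ℝ := fun i => i.1.2.1
  let N : ι → ℝ := fun i => i.1.2.2
  have i0 : ∀ i, 0 ≤ S i := fun i => i.2.1
  have i1 : ∀ i, S i ≤ M i := fun i => i.2.2.1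
  have i2 : ∀ i, M i ≤ N i := fun i => i.2.2.2.1
  have i3 : ∀ i, N i ≤ T := fun i => i.2.2.2.2
  have iS : ∀ i, S i ∈ Set.Icc 0 T := fun i => ⟨i0 i, (i1 i).trans ((i2 i).trans (i3 i))⟩
  have iM : ∀ i, M i ∈ Set.Icc 0 T := fun i => ⟨(i0 i).trans (i1 i), (i2 i).trans (i3 i)⟩
  have iN : ∀ i, N i ∈ Set.Icc 0 T := fun i => ⟨(i0 i).trans ((i1 i).trans (i2 i)), i3 i⟩
  let e : ι → ℝ := fun i => ω (S i) (N i) ^ (1 / p)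
  have w0 : ∀ i, 0 ≤ ω (S i) (N i) := fun i => hω.nonneg (i0 i) ((i1 i).trans (i2 i)) (i3 i)
  have w1 : ∀ i, 0 ≤ ω (S i) (M i) := fun i => hω.nonneg (i0 i) (i1 i) (iM i).2
  have w2 : ∀ i, 0 ≤ ω (M i) (N i) := fun i => hω.nonneg (iM i).1 (i2 i) (i3 i)
  have wsup : ∀ i, ω (S i) (M i) + ω (M i) (N i) ≤ ω (S i) (N i) :=
    fun i => hω.superadditive (i0 i) (i1 i) (i2 i) (i3 i)
  have e0 : ∀ i, 0 ≤ e i := fun i => Real.rpow_nonneg (w0 i) _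
  have pe : ∀ (n : ℕ) i, ω (S i) (N i) ^ ((n : ℝ) / p) = e i ^ n := by
    intro n i
    rw [← Real.rpow_natCast, ← Real.rpow_mul (w0 i)]
    congr 1; ring
  have pe2 : ∀ i, ω (S i) (N i) ^ ((2 : ℝ) / p) = e i ^ 2 := fun i => by
    simpa using pe 2 i
  have pe3 : ∀ i, ω (S i) (N i) ^ ((3 : ℝ) / p) = e i ^ 3 := fun i => by
    simpa using pe 3 i
  have r11 : ∀ i, ω (S i) (M i) ^ (1 / p) ≤ e i := fun i =>
    Real.rpow_le_rpow (w1 i) (by linarith [wsup i, w2 i]) (by positivity)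
  have r21 : ∀ i, ω (M i) (N i) ^ (1 / p) ≤ e i := fun i =>
    Real.rpow_le_rpow (w2 i) (by linarith [wsup i, w1 i]) (by positivity)
  have r12 : ∀ i, ω (S i) (M i) ^ (2 / p) ≤ e i ^ 2 := fun i => by
    rw [← pe2]
    exact Real.rpow_le_rpow (w1 i) (by linarith [wsup i, w2 i]) (by positivity)
  have r22 : ∀ i, ω (M i) (N i) ^ (2 / p) ≤ e i ^ 2 := fun i => by
    rw [← pe2]
    exact Real.rpow_le_rpow (w2 i) (by linarith [wsup i, w1 i]) (by positivity)
  have ds : ∀ (n : ℕ) {f g : ι → Euc d}, (fun i => f i - g i) =O[⊤] e →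
      (fun i => ‖f i - g i‖ ^ n) =O[⊤] fun i => e i ^ n := fun n f g h => h.norm_left.pow n
  have he : e =O[⊤] fun _ => (1 : ℝ) := by
    refine O_mk (ω 0 T ^ (1 / p)) (fun i => ?_) (fun _ => zero_le_one)
    rw [Real.norm_of_nonneg (e0 i), mul_one]
    refine Real.rpow_le_rpow (w0 i) ?_ (by positivity)
    have a1 := hω.superadditive le_rfl (i0 i) (iS i).2 le_rfl
    have a2 := hω.superadditive (i0 i) ((i1 i).trans (i2 i)) (i3 i) le_rfl
    have a3 := hω.nonneg le_rfl (i0 i) (iS i).2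
    have a4 := hω.nonneg (iN i).1 (i3 i) le_rfl
    linarith
  have cU1 : ContinuousOn (fun s => pd2 U (y s, y s)) (Set.Icc 0 T) :=
    ((pd2_smooth hDo hG.smooth_U).continuousOn).comp (hyc.prodMk hyc)
      (fun s hs => hLD ⟨hyL s hs, hyL s hs⟩)
  have cB : ContinuousOn (fun s => pd2 (pd2 ψ) (y s, y s)) (Set.Icc 0 T) :=
    ((pd2_smooth hDo (pd2_smooth hDo hG.smooth_psi)).continuousOn).comp (hyc.prodMk hyc)
      (fun s hs => hLD ⟨hyL s hs, hyL s hs⟩)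
  have main := core (l := (⊤ : Filter ι)) (e := e) (a := fun i => y (S i)) (b := fun i => y (M i))
    (c := fun i => y (N i)) (pab := fun i => ψ (y (S i), y (M i)))
    (pac := fun i => ψ (y (S i), y (N i))) (pbc := fun i => ψ (y (M i), y (N i)))
    (ys := fun i => y' (S i)) (yt := fun i => y' (M i))
    (αs := fun i => α (S i)) (αt := fun i => α (M i))
    (βs := fun i => α' (S i)) (βt := fun i => α' (M i))
    (x1 := fun i => x (M i) - x (S i)) (x2 := fun i => x (N i) - x (M i))
    (X1 := fun i => XX (S i) (M i)) (X2 := fun i => XX (M i) (N i))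
    (X3 := fun i => XX (S i) (N i)) (Uba := fun i => U (y (M i), y (S i)))
    (Ua := fun i => pd2 U (y (S i), y (S i))) (Ub := fun i => pd2 U (y (M i), y (M i)))
    (Ba := fun i => pd2 (pd2 ψ) (y (S i), y (S i)))
    (Bb := fun i => pd2 (pd2 ψ) (y (M i), y (M i)))
    he (fun i => hX.chen (i0 i) (i1 i) (i2 i) (i3 i))
    (O_mk' Cy (fun i => (hCy (i0 i) (i1 i) (iM i).2).1) (fun i => Real.rpow_nonneg (w1 i) _) r12)
    (O_mk' Cy (fun i => (hCy (iM i).1 (i2 i) (i3 i)).1) (fun i => Real.rpow_nonneg (w2 i) _) r22)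
    (O_mk' Cy (fun i => (hCy (i0 i) (i1 i) (iM i).2).2) (fun i => Real.rpow_nonneg (w1 i) _) r11)
    (O_bd S hy'c iS) (O_bd M hy'c iM)
    (O_mk 1 (fun i => by
      rw [one_mul]; exact (hX.bound_x (i0 i) (i1 i) (iM i).2).trans (r11 i)) e0)
    (O_mk 1 (fun i => by
      rw [one_mul]; exact (hX.bound_x (iM i).1 (i2 i) (i3 i)).trans (r21 i)) e0)
    (O_mk 1 (fun i => by
      rw [one_mul]; exact (hX.bound_XX (iM i).1 (i2 i) (i3 i)).trans (r22 i))
      (fun i => pow_nonneg (e0 i) 2))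
    (O_bd S hαc iS) (O_bd M hαc iM) (O_bd (F := Euc k →L[ℝ] Euc d →L[ℝ] V) (f := α') S hα'c iS) (O_bd (F := Euc k →L[ℝ] Euc d →L[ℝ] V) (f := α') M hα'c iM)
    (O_mk' Cα (fun i => (hCα (i0 i) (i1 i) (iM i).2).1) (fun i => Real.rpow_nonneg (w1 i) _) r12)
    (fun w => O_mk' (Cα * ‖w‖) (fun i => (hCα (i0 i) (i1 i) (iM i).2).2 w)
      (fun i => Real.rpow_nonneg (w1 i) _) r11)
    (fun h => by
      refine (O_mk (g := fun i => ‖y (M i) - y (S i)‖ ^ 2) CU (fun i => ?_)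
        (fun i => by positivity)).trans (ds 2 h)
      have := hU (y (M i)) (hyL _ (iM i)) (y (S i)) (hyL _ (iS i))
      rw [hG.diag_U _ (hLD ⟨hyL _ (iM i), hyL _ (iM i)⟩), norm_sub_rev (y (S i))] at this
      exact this)
    (fun h => by
      refine (O_mk (F := Euc d →L[ℝ] Euc d →L[ℝ] Euc d) (g := fun i => ‖y (M i) - y (S i)‖) (CU1 * 2) (fun i => ?_)
        (fun i => by positivity)).trans h.norm_left
      have := hU1 (y (M i)) (hyL _ (iM i)) (y (M i)) (hyL _ (iM i))
        (y (S i)) (hyL _ (iS i)) (y (S i)) (hyL _ (iS i))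
      rw [← two_mul, ← mul_assoc] at this
      exact this)
    (O_bd (F := Euc d →L[ℝ] Euc d →L[ℝ] Euc d) (f := fun s => pd2 U (y s, y s)) S cU1 iS)
    (fun h => by
      refine (O_mk (F := Euc d →L[ℝ] Euc d →L[ℝ] Euc d) (g := fun i => ‖y (M i) - y (S i)‖) (CB * 2) (fun i => ?_)
        (fun i => by positivity)).trans h.norm_left
      have := hB (y (M i)) (hyL _ (iM i)) (y (M i)) (hyL _ (iM i))
        (y (S i)) (hyL _ (iS i)) (y (S i)) (hyL _ (iS i))
      rw [← two_mul, ← mul_assoc] at this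
      exact this)
    (O_bd (F := Euc d →L[ℝ] Euc d →L[ℝ] Euc d) (f := fun s => pd2 (pd2 ψ) (y s, y s)) S cB iS)
    (fun i v w => pd2_pd2_symm hDo hG.smooth_psi (hLD ⟨hyL _ (iS i), hyL _ (iS i)⟩) v w)
    (fun h => (O_mk Cp (fun i => hP' _ (hyL _ (iS i)) _ (hyL _ (iM i)))
      (fun i => by positivity)).trans (ds 3 h))
    (fun h => (O_mk Cp (fun i => hP' _ (hyL _ (iS i)) _ (hyL _ (iN i)))
      (fun i => by positivity)).trans (ds 3 h))
    (fun h => (O_mk Cp (fun i => hP' _ (hyL _ (iM i)) _ (hyL _ (iN i)))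
      (fun i => by positivity)).trans (ds 3 h))
  rw [Asymptotics.isBigO_top] at main
  obtain ⟨C, hC⟩ := main
  refine ⟨C, fun s t u h0 h1 h2 h3 => ?_⟩
  let i : ι := ⟨(s, t, u), h0, h1, h2, h3⟩
  have := hC i
  rw [Real.norm_of_nonneg (pow_nonneg (e0 i) 3), ← pe3] at this
  refine le_trans (le_of_eq ?_) this
  unfold gaugeIntegrand
  simp only [hSg (y s) (hyL _ (iS i)), hSg (y t) (hyL _ (iM i))]
  rfl
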